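/- A generalised multi-clause-set F is matching lean if and only if there exists a subgraph of the bipartite graph B(F) which is a forest, covers all variable-nodes of B(F), and in which every variable-node has degree exactly 2. -/

import Mathlib

open scoped Classical

namespace GCLS

variable {V α : Type} [DecidableEq V] [DecidableEq α]

/-- A finite "functional" set of (variable, value) pairs, with values inside the
given domains `D`; used both for clauses and for partial assignments. -/
def FinFn (D : V → Finset α) : Type :=
  { s : Finset (V × α) // (∀ p ∈ s, p.2 ∈ D p.1) ∧
      ∀ p ∈ s, ∀ q ∈ s, p.1 = q.1 → p = q }

variable {D : V → Finset α}

instance : DecidableEq (FinFn D) :=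
  fun a b => decidable_of_iff (a.1 = b.1) Subtype.ext_iff.symm

namespace FinFn

/-- The set of variables occurring. -/
def vars (s : FinFn D) : Finset V := s.1.image Prod.fst

/-- Restriction to the pairs whose variable lies in `W`. -/
def restrictVars (s : FinFn D) (W : Finset V) : FinFn D :=
  ⟨s.1.filter (fun p => p.1 ∈ W),
   fun p hp => s.2.1 p (Finset.mem_filter.mp hp).1,
   fun p hp q hq h =>
     s.2.2 p (Finset.mem_filter.mp hp).1 q (Finset.mem_filter.mp hq).1 h⟩

/-- Removal of a set of pairs. -/
def sdiff (s : FinFn D) (t : Finset (V × α)) : FinFn D :=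
  ⟨s.1 \ t,
   fun p hp => s.2.1 p (Finset.mem_sdiff.mp hp).1,
   fun p hp q hq h =>
     s.2.2 p (Finset.mem_sdiff.mp hp).1 q (Finset.mem_sdiff.mp hq).1 h⟩

end FinFn

/-- Clauses: finite sets of literals `(v,ε)` (meaning "v ≠ ε"), at most one literal
per variable, values inside the domains. -/
abbrev Clause (D : V → Finset α) := FinFn D

/-- Partial assignments: finitely many variables get values inside their domains. -/
abbrev PAssign (D : V → Finset α) := FinFn D

/-- `φ` satisfies the literal `(v,ε)` (i.e. "v ≠ ε"): `v` is assigned a value ≠ `ε`. -/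
def SatLit (φ : PAssign D) (l : V × α) : Prop :=
  ∃ ε, (l.1, ε) ∈ φ.1 ∧ ε ≠ l.2

/-- `φ` satisfies a clause iff it satisfies some literal of it. -/
def SatClause (φ : PAssign D) (C : Clause D) : Prop :=
  ∃ l ∈ C.1, SatLit φ l

/-- The clause obtained from `C` by deleting all literals falsified by `φ`. -/
def Clause.restrict (φ : PAssign D) (C : Clause D) : Clause D :=
  FinFn.sdiff C φ.1

/-- The operation `φ * F` on multi-clause-sets: remove all clauses satisfied by `φ`
and delete all falsified literals from the remaining clauses. -/
noncomputable def applyM (φ : PAssign D) (F : Multiset (Clause D)) : Multiset (Clause D) :=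
  (F.filter (fun C => ¬ SatClause φ C)).map (Clause.restrict φ)

/-- The operation `φ * F` on clause-sets (with contraction of equal clauses). -/
noncomputable def applyF (φ : PAssign D) (F : Finset (Clause D)) : Finset (Clause D) :=
  (F.filter (fun C => ¬ SatClause φ C)).image (Clause.restrict φ)

/-- Satisfiability: some partial assignment satisfies all clauses. -/
def Sat (F : Multiset (Clause D)) : Prop :=
  ∃ φ : PAssign D, applyM φ F = 0

/-- Minimal unsatisfiability of a clause-set. -/
def MinUnsat (F : Finset (Clause D)) : Prop :=
  ¬ Sat F.val ∧ ∀ F' ⊂ F, Sat F'.val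

/-- The variables of a multi-clause-set. -/
def mvars (F : Multiset (Clause D)) : Finset V := F.toFinset.sup FinFn.vars

/-- The deficiency `δ(F) = c(F) - Σ_{v ∈ var(F)} (|D_v| - 1)`. -/
def delta (F : Multiset (Clause D)) : ℤ :=
  (Multiset.card F : ℤ) - ∑ v ∈ mvars F, ((D v).card - 1 : ℤ)

lemma powerset_toFinset_nonempty (F : Multiset (Clause D)) :
    F.powerset.toFinset.Nonempty :=
  ⟨0, by simp⟩

/-- The maximal deficiency `δ*(F) = max {δ(F') : F' ≤ F}`. -/
noncomputable def deltaStar (F : Multiset (Clause D)) : ℤ :=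
  F.powerset.toFinset.sup' (powerset_toFinset_nonempty F) delta

/-- A tight sub-multi-clause-set: `F' ≤ F` with `δ(F') = δ*(F)`. -/
noncomputable def Tight (F F' : Multiset (Clause D)) : Prop :=
  F' ≤ F ∧ delta F' = deltaStar F

/-- `F` is matching satisfiable: the clause-variable graph `B(F)` has a matching
covering all clause-nodes.  Such a matching is encoded as a multiset `P` of pairs
(clause-occurrence, variable-node), where the variable-nodes `(v,k)`,
`k < |D v| - 1`, are the copies of the variable `v`; the matching covers each
clause-occurrence exactly once (`P.map Prod.fst = F`), uses pairwise distinct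
variable-nodes, and respects adjacency in `B(F)`. -/
def MatchingSat (F : Multiset (Clause D)) : Prop :=
  ∃ P : Multiset (Clause D × (V × ℕ)),
    P.map Prod.fst = F ∧ (P.map Prod.snd).Nodup ∧
    ∀ p ∈ P, p.2.1 ∈ FinFn.vars p.1 ∧ p.2.2 < (D p.2.1).card - 1

/-- The edge between clause `C` and the copies of variable `v` is retained in
`B_φ(F)`: the literal of `C` with variable `v` is satisfied by `φ`. -/
def EdgeSat (φ : PAssign D) (C : Clause D) (v : V) : Prop :=
  ∃ ε, (v, ε) ∈ C.1 ∧ SatLit φ (v, ε)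

/-- `φ` is matching-satisfying for `F`: `B_φ(F)` has a matching covering all
clause-nodes. -/
def MatchingSatisfying (φ : PAssign D) (F : Multiset (Clause D)) : Prop :=
  ∃ P : Multiset (Clause D × (V × ℕ)),
    P.map Prod.fst = F ∧ (P.map Prod.snd).Nodup ∧
    ∀ p ∈ P, p.2.2 < (D p.2.1).card - 1 ∧ EdgeSat φ p.1 p.2.1

/-- The maximum size of a matching in `B(F)`. -/
noncomputable def nu (F : Multiset (Clause D)) : ℕ :=
  sSup { k | ∃ P : Multiset (Clause D × (V × ℕ)),
    P.map Prod.fst ≤ F ∧ (P.map Prod.snd).Nodup ∧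
    (∀ p ∈ P, p.2.1 ∈ FinFn.vars p.1 ∧ p.2.2 < (D p.2.1).card - 1) ∧
    Multiset.card P = k }

/-- The maximum size of a matching in `B_φ(F)`. -/
noncomputable def nuSub (φ : PAssign D) (F : Multiset (Clause D)) : ℕ :=
  sSup { k | ∃ P : Multiset (Clause D × (V × ℕ)),
    P.map Prod.fst ≤ F ∧ (P.map Prod.snd).Nodup ∧
    (∀ p ∈ P, p.2.2 < (D p.2.1).card - 1 ∧ EdgeSat φ p.1 p.2.1) ∧
    Multiset.card P = k }

/-- `φ` is matching-maximum for `F`. -/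
noncomputable def MatchingMaximum (φ : PAssign D) (F : Multiset (Clause D)) : Prop :=
  nuSub φ F = nu F

/-- `φ` is an autarky for `F`: every clause touched by `φ` is satisfied by `φ`. -/
def IsAutarky (φ : PAssign D) (F : Multiset (Clause D)) : Prop :=
  ∀ C ∈ F, (FinFn.vars C ∩ FinFn.vars φ).Nonempty → SatClause φ C

/-- `F` is lean: it has no non-trivial autarky. -/
def IsLean (F : Multiset (Clause D)) : Prop :=
  ¬ ∃ φ : PAssign D, IsAutarky φ F ∧ (FinFn.vars φ ∩ mvars F).Nonempty

/-- The sub-multi-clause-set of clauses touched by the variables in `W`. -/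
noncomputable def touchedBy (F : Multiset (Clause D)) (W : Finset V) : Multiset (Clause D) :=
  F.filter (fun C => (FinFn.vars C ∩ W).Nonempty)

/-- The restriction `F[W]`: keep the clauses touching `W` and delete from them all
literals whose variable is not in `W`. -/
noncomputable def restrictTo (F : Multiset (Clause D)) (W : Finset V) : Multiset (Clause D) :=
  (touchedBy F W).map (fun C => FinFn.restrictVars C W)

/-- `φ` is a matching autarky for `F`: `φ` is matching-satisfying for the
sub-multi-clause-set of clauses touched by `φ`. -/
noncomputable def IsMatchingAutarky (φ : PAssign D) (F : Multiset (Clause D)) : Prop :=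
  MatchingSatisfying φ (touchedBy F (FinFn.vars φ))

/-- `F` is matching lean: no non-trivial matching autarky. -/
noncomputable def MatchingLean (F : Multiset (Clause D)) : Prop :=
  ¬ ∃ φ : PAssign D, IsMatchingAutarky φ F ∧ (FinFn.vars φ ∩ mvars F).Nonempty

lemma surp_nonempty {F : Multiset (Clause D)} (h : (mvars F).Nonempty) :
    ((mvars F).powerset.erase ∅).Nonempty := by
  obtain ⟨v, hv⟩ := h
  refine ⟨{v}, ?_⟩
  simp [Finset.mem_erase, Finset.singleton_subset_iff, hv]

/-- The surplus `surp(F) = min {δ(F[W]) : ∅ ≠ W ⊆ var(F)}` (and `0` if `var(F) = ∅`). -/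
noncomputable def surp (F : Multiset (Clause D)) : ℤ :=
  if h : (mvars F).Nonempty then
    ((mvars F).powerset.erase ∅).inf' (surp_nonempty h)
      (fun W => delta (restrictTo F W))
  else 0

/-- The number of occurrences of the literal `l` in `F`. -/
noncomputable def litCount (F : Multiset (Clause D)) (l : V × α) : ℕ :=
  Multiset.card (F.filter (fun C => l ∈ C.1))

/-- The number of occurrences `#_v(F)` of the variable `v` in `F`. -/
noncomputable def varCount (F : Multiset (Clause D)) (v : V) : ℕ :=
  ∑ ε ∈ D v, litCount F (v, ε)

/-- The partial assignment `⟨v → ε⟩`. -/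
def single (v : V) (ε : α) (hε : ε ∈ D v) : PAssign D :=
  ⟨{(v, ε)}, by
    refine ⟨?_, ?_⟩
    · intro p hp
      rw [Finset.mem_singleton] at hp
      subst hp; exact hε
    · intro p hp q hq _
      rw [Finset.mem_singleton] at hp hq
      subst hp; subst hq; rfl⟩

/-- Composition `φ ∘ ψ` of partial assignments: domain is the union of the domains,
`ψ` taking precedence. -/
def comp (φ ψ : PAssign D) : PAssign D :=
  ⟨ψ.1 ∪ φ.1.filter (fun p => p.1 ∉ FinFn.vars ψ), by
    constructor
    · intro p hp
      rcases Finset.mem_union.mp hp with h | h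
      · exact ψ.2.1 p h
      · exact φ.2.1 p (Finset.mem_filter.mp h).1
    · intro p hp q hq hpq
      rcases Finset.mem_union.mp hp with h1 | h1 <;>
        rcases Finset.mem_union.mp hq with h2 | h2
      · exact ψ.2.2 p h1 q h2 hpq
      · exact absurd (hpq ▸ Finset.mem_image_of_mem Prod.fst h1)
          (Finset.mem_filter.mp h2).2
      · exact absurd (hpq.symm ▸ Finset.mem_image_of_mem Prod.fst h2)
          (Finset.mem_filter.mp h1).2
      · exact φ.2.2 p (Finset.mem_filter.mp h1).1 q (Finset.mem_filter.mp h2).1 hpq⟩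

/-- Two clauses clash (in some variable). -/
def Clash (C C' : Clause D) : Prop :=
  ∃ v ε ε', (v, ε) ∈ C.1 ∧ (v, ε') ∈ C'.1 ∧ ε ≠ ε'

/-- The number of variables in which two clauses clash. -/
noncomputable def clashCount (C C' : Clause D) : ℕ :=
  ((FinFn.vars C).filter
    (fun v => ∃ ε ε', (v, ε) ∈ C.1 ∧ (v, ε') ∈ C'.1 ∧ ε ≠ ε')).card

/-- Hitting clause-sets: every two distinct clauses clash. -/
def Hitting (F : Finset (Clause D)) : Prop :=
  ∀ C ∈ F, ∀ C' ∈ F, C ≠ C' → Clash C C'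

/-- Boolean clauses over the boolean variables `V × α` (one boolean variable per
generalised literal; the value `false` gives the positive boolean literal). -/
abbrev BClause (V α : Type) :=
  Clause (fun _ : V × α => (Finset.univ : Finset Bool))

/-- The direct translation of a single clause: each literal `(v,ε)` is replaced by
the positive boolean literal of the boolean variable `(v,ε)`. -/
def dirClause (C : Clause D) : BClause V α :=
  ⟨C.1.image (fun p => (p, false)), by
    constructor
    · intro p _; exact Finset.mem_univ _
    · intro p hp q hq h
      simp only [Finset.mem_image] at hp hq
      obtain ⟨a, -, rfl⟩ := hp
      obtain ⟨b, -, rfl⟩ := hq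
      exact congrArg (fun x => (x, false)) h⟩

/-- The ALO-clause for a variable `v`: the negative boolean literals of the boolean
variables `(v,ε)` for `ε ∈ D v`. -/
def aloClause (D : V → Finset α) (v : V) : BClause V α :=
  ⟨(D v).image (fun ε => ((v, ε), true)), by
    constructor
    · intro p _; exact Finset.mem_univ _
    · intro p hp q hq h
      simp only [Finset.mem_image] at hp hq
      obtain ⟨a, -, rfl⟩ := hp
      obtain ⟨b, -, rfl⟩ := hq
      exact congrArg (fun x => (x, true)) h⟩

/-- The direct translation `Γ(F)`: the translated clauses together with the
ALO-clauses for all occurring variables. -/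
noncomputable def dirTrans (F : Finset (Clause D)) : Finset (BClause V α) :=
  F.image dirClause ∪ (mvars F.val).image (aloClause D)

/-!
A matching autarky on a set `W` of variables is the same as a matching of the clauses touching `W`
into the copies of the variables in `W`: at most `|D v| - 1` clauses are matched to copies of `v`,
so some value of `v` satisfies the literals on `v` in all of them. By Hall's theorem, applied to a
minimal set of variable-nodes without surplus, `F` is therefore matching lean iff every non-empty
set `I` of variable-nodes has more than `|I|` neighbours. By a theorem of Lovász this strict Hall
condition survives in a subgraph in which all variable-nodes have degree `2`: as long as a node has
degree at least `3`, one of its edges can be removed. For graphs with all these degrees equal to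
`2`, the strict Hall condition says that a set of edges spans more vertices than it has edges.
-/

section StrictHall

open Finset

variable {ι β : Type*} [DecidableEq β] {T : Finset ι} {A : ι → Finset β}

/-- The strict Hall condition for the finite family `(A i)_{i ∈ T}`, i.e. positive surplus of the
bipartite graph joining `i ∈ T` to the elements of `A i`. -/
def StrictHall (T : Finset ι) (A : ι → Finset β) : Prop :=
  ∀ I ⊆ T, I.Nonempty → #I < #(I.biUnion A)

theorem strictHall_map_iff {γ : Type*} [DecidableEq γ] (f : β ↪ γ) :
    StrictHall T (fun i => (A i).map f) ↔ StrictHall T A := by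
  simp only [StrictHall, map_eq_image, ← biUnion_image, card_image_of_injective _ f.injective]

theorem StrictHall.two_le_card (h : StrictHall T A) {i : ι} (hi : i ∈ T) : 2 ≤ #(A i) := by
  have hsingle := h {i} (singleton_subset_iff.2 hi) (singleton_nonempty i)
  rwa [card_singleton, singleton_biUnion] at hsingle

theorem StrictHall.update [DecidableEq ι] (h : StrictHall T A) {i : ι} {S : Finset β}
    (hS : ∀ I ⊆ T, i ∉ I → #I + 1 < #(I.biUnion A ∪ S)) :
    StrictHall T (Function.update A i S) := by
  intro I hIT hI
  by_cases hi : i ∈ I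
  · have hunion : I.biUnion (Function.update A i S) = (I.erase i).biUnion A ∪ S := by
      conv_lhs => rw [← insert_erase hi, biUnion_insert, Function.update_self, union_comm]
      congr 1
      exact biUnion_congr rfl fun j hj => Function.update_of_ne (ne_of_mem_erase hj) _ _
    rw [hunion, ← card_erase_add_one hi]
    exact hS _ ((erase_subset _ _).trans hIT) (notMem_erase i I)
  · rw [biUnion_congr rfl fun j hj => Function.update_of_ne (ne_of_mem_of_not_mem hj hi) S A]
    exact h I hIT hI

/-- Two obstructions `I` and `J` to shrinking `A i` would violate the submodularity of
`I ↦ #(I.biUnion A)`. -/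
theorem StrictHall.add_one_lt_card_or (h : StrictHall T A) {i : ι} (hi : i ∈ T)
    (hcard : 2 < #(A i)) {x y : β} (hxy : x ≠ y) {I J : Finset ι}
    (hIT : I ⊆ T) (hiI : i ∉ I) (hJT : J ⊆ T) (hiJ : i ∉ J) :
    #I + 1 < #(I.biUnion A ∪ (A i).erase x) ∨ #J + 1 < #(J.biUnion A ∪ (A i).erase y) := by
  classical
  set X := I.biUnion A ∪ (A i).erase x
  set Y := J.biUnion A ∪ (A i).erase y
  have hunion : #(I ∪ J) + 1 < #(X ∪ Y) := by
    have hinsert := h (insert i (I ∪ J)) (insert_subset hi (union_subset hIT hJT))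
      (insert_nonempty _ _)
    rw [card_insert_of_notMem (by simp [hiI, hiJ])] at hinsert
    refine hinsert.trans_le (card_le_card fun z hz => ?_)
    have hz_ne : z ≠ x ∨ z ≠ y := by grind
    grind
  have hinter : #(I ∩ J) < #(X ∩ Y) := by
    rcases (I ∩ J).eq_empty_or_nonempty with hIJ | hIJ
    · have herase : ((A i).erase x).erase y ⊆ X ∩ Y := by grind
      have hcard_erase := card_le_card herase
      have hx := pred_card_le_card_erase (s := A i) (a := x)
      have hy := pred_card_le_card_erase (s := (A i).erase x) (a := y)
      rw [hIJ, card_empty]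
      omega
    · exact (h _ (inter_subset_left.trans hIT) hIJ).trans_le (card_le_card (by grind))
  have hXY := card_union_add_card_inter X Y
  have hIJ := card_union_add_card_inter I J
  omega

theorem StrictHall.exists_update_erase [DecidableEq ι] (h : StrictHall T A) {i : ι} (hi : i ∈ T)
    (hcard : 2 < #(A i)) :
    ∃ x ∈ A i, StrictHall T (Function.update A i ((A i).erase x)) := by
  by_contra! hcon
  have hobstruction : ∀ x ∈ A i, ∃ I ⊆ T, i ∉ I ∧ #(I.biUnion A ∪ (A i).erase x) ≤ #I + 1 := by
    intro x hx
    by_contra! hlt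
    exact hcon x hx (h.update hlt)
  obtain ⟨x, hx, y, hy, hxy⟩ := one_lt_card.1 ((Nat.lt_succ_self 1).trans hcard)
  obtain ⟨I, hIT, hiI, hI⟩ := hobstruction x hx
  obtain ⟨J, hJT, hiJ, hJ⟩ := hobstruction y hy
  have := h.add_one_lt_card_or hi hcard hxy hIT hiI hJT hiJ
  omega

theorem StrictHall.exists_subfamily_card_eq_two (h : StrictHall T A) :
    ∃ B : ι → Finset β, (∀ i, B i ⊆ A i) ∧ (∀ i ∈ T, #(B i) = 2) ∧ StrictHall T B := by
  classical
  induction hn : ∑ i ∈ T, #(A i) using Nat.strong_induction_on generalizing A with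
  | _ n ih =>
  by_cases hle : ∀ i ∈ T, #(A i) ≤ 2
  · exact ⟨A, fun _ => Subset.rfl, fun i hi => (hle i hi).antisymm (h.two_le_card hi), h⟩
  push Not at hle
  obtain ⟨i, hi, hcard⟩ := hle
  obtain ⟨x, hx, hupdate⟩ := h.exists_update_erase hi hcard
  have hsub : ∀ j, Function.update A i ((A i).erase x) j ⊆ A j :=
    update_le_self_iff.2 (erase_subset x (A i))
  have hsum : ∑ j ∈ T, #(Function.update A i ((A i).erase x) j) < n := by
    rw [← hn]
    refine sum_lt_sum (fun j _ => card_le_card (hsub j)) ⟨i, hi, ?_⟩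
    rw [Function.update_self]
    exact card_erase_lt_of_mem hx
  obtain ⟨B, hB, hB_card, hB_hall⟩ := ih _ hsum hupdate rfl
  exact ⟨B, fun j => (hB j).trans (hsub j), hB_card, hB_hall⟩

theorem card_le_card_biUnion_filter_of_minimal {I : Finset ι}
    (hI : Minimal (fun J : Finset ι => J.Nonempty ∧ #(J.biUnion A) ≤ #J) I)
    {S : Finset β} (hS : S ⊆ I.biUnion A) :
    #S ≤ #(S.biUnion fun b => {i ∈ I | b ∈ A i}) := by
  classical
  by_contra! hlt
  set K := S.biUnion fun b => {i ∈ I | b ∈ A i}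
  have hKI : K ⊆ I := biUnion_subset.2 fun b _ => filter_subset _ I
  have hcard_sdiff : #(I \ K) + #K = #I := card_sdiff_add_card_eq_card hKI
  have hunion : #((I \ K).biUnion A) + #S ≤ #(I.biUnion A) := by
    rw [← card_union_of_disjoint (disjoint_left.2 (by grind))]
    exact card_le_card (union_subset (biUnion_subset_biUnion_of_subset_left _ sdiff_subset) hS)
  have hdef : #((I \ K).biUnion A) < #(I \ K) := by
    have := hI.prop.2
    omega
  have hI_sub : I ⊆ I \ K :=
    hI.le_of_le ⟨card_pos.1 (Nat.zero_lt_of_lt hdef), hdef.le⟩ sdiff_subset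
  obtain ⟨b, hb⟩ := card_pos.1 (Nat.zero_lt_of_lt hlt)
  obtain ⟨i, hi, hbi⟩ := mem_biUnion.1 (hS hb)
  exact (mem_sdiff.1 (hI_sub hi)).2 (mem_biUnion.2 ⟨b, hb, mem_filter.2 ⟨hi, hbi⟩⟩)

theorem exists_injective_of_not_strictHall (h : ¬ StrictHall T A) :
    ∃ I ⊆ T, I.Nonempty ∧ ∃ f : I.biUnion A → ι,
      Function.Injective f ∧ ∀ b, f b ∈ I ∧ ↑b ∈ A (f b) := by
  classical
  unfold StrictHall at h
  push Not at h
  obtain ⟨I₀, hI₀T, hI₀⟩ := h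
  obtain ⟨I, hII₀, hI⟩ := exists_minimal_le_of_wellFoundedLT
    (fun J : Finset ι => J.Nonempty ∧ #(J.biUnion A) ≤ #J) I₀ hI₀
  have hall : ∀ s : Finset (I.biUnion A),
      #s ≤ #(s.biUnion fun b => {i ∈ I | ↑b ∈ A i}) := by
    intro s
    have hs : s.image Subtype.val ⊆ I.biUnion A := image_subset_iff.2 fun b _ => b.2
    have := card_le_card_biUnion_filter_of_minimal hI hs
    rwa [card_image_of_injective _ Subtype.val_injective, image_biUnion] at this
  obtain ⟨f, hf, hfI⟩ := (all_card_le_biUnion_card_iff_exists_injective _).1 hall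
  exact ⟨I, hII₀.trans hI₀T, hI.prop.1, f, hf, fun b => mem_filter.1 (hfI b)⟩

end StrictHall

section Forest

open Finset

variable {ι β : Type*} [DecidableEq ι] [DecidableEq β] {T : Finset ι} {A B : ι → Finset β}

/-- The edge set `E` of a bipartite graph on `β` and `ι` is a forest: every non-empty set of edges
spans more vertices than it has edges, which excludes cycles. -/
def IsForest (E : Finset (β × ι)) : Prop :=
  ∀ E' ⊆ E, E'.Nonempty → #E' + 1 ≤ #(E'.image Prod.fst) + #(E'.image Prod.snd)

/-- The edge set of the bipartite graph joining each `i ∈ T` to the elements of `B i`. -/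
def edgesOf (T : Finset ι) (B : ι → Finset β) : Finset (β × ι) :=
  T.biUnion fun i => B i ×ˢ {i}

theorem mem_edgesOf {e : β × ι} : e ∈ edgesOf T B ↔ e.2 ∈ T ∧ e.1 ∈ B e.2 := by
  simp only [edgesOf, mem_biUnion, mem_product, mem_singleton]
  grind

theorem filter_edgesOf_snd_eq {i : ι} (hi : i ∈ T) :
    {e ∈ edgesOf T B | e.2 = i} = B i ×ˢ {i} := by
  ext e
  simp only [mem_filter, mem_edgesOf, mem_product, mem_singleton]
  grind

theorem IsForest.strictHall {E : Finset (β × ι)} (hE : IsForest E) (hEA : ∀ e ∈ E, e.1 ∈ A e.2)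
    (hdeg : ∀ i ∈ T, 2 ≤ #{e ∈ E | e.2 = i}) : StrictHall T A := by
  intro I hIT hI
  set E' := {e ∈ E | e.2 ∈ I} with hE'
  have hfst : E'.image Prod.fst ⊆ I.biUnion A := by
    simp only [hE', image_subset_iff, mem_filter, mem_biUnion]
    exact fun e he => ⟨e.2, he.2, hEA e he.1⟩
  have hsnd : E'.image Prod.snd ⊆ I := image_subset_iff.2 fun e he => (mem_filter.1 he).2
  have hcard : 2 * #I ≤ #E' := by
    refine mul_card_image_le_card_of_maps_to (f := Prod.snd)
      (fun e he => (mem_filter.1 he).2) 2 fun i hi => ?_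
    rw [filter_filter]
    refine (hdeg i (hIT hi)).trans (card_le_card fun e he => ?_)
    grind
  have hpos := hI.card_pos
  have hforest := hE E' (filter_subset _ _) (card_pos.1 (by omega))
  have hfst_card := card_le_card hfst
  have hsnd_card := card_le_card hsnd
  omega

/-- An endpoint `i` whose edges do not all lie in `E'` contributes at most one edge to `E'`. -/
theorem card_le_card_image_snd_add_card_filter (hB : ∀ i ∈ T, #(B i) ≤ 2) {E' : Finset (β × ι)}
    (hE' : E' ⊆ edgesOf T B) :
    #E' ≤ #(E'.image Prod.snd) + #{i ∈ E'.image Prod.snd | B i ×ˢ {i} ⊆ E'} := by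
  rw [card_eq_sum_card_image Prod.snd E', card_filter, card_eq_sum_ones, ← sum_add_distrib]
  refine sum_le_sum fun i hi => ?_
  obtain ⟨e, he, rfl⟩ := mem_image.1 hi
  have heT := (mem_edgesOf.1 (hE' he)).1
  have hfiber : {e' ∈ E' | e'.2 = e.2} ⊆ B e.2 ×ˢ {e.2} :=
    (filter_subset_filter _ hE').trans (filter_edgesOf_snd_eq heT).subset
  have hcard : #(B e.2 ×ˢ {e.2}) ≤ 2 := by simpa using hB _ heT
  split_ifs with hfull
  · exact (card_le_card hfiber).trans hcard
  · have hssub := card_lt_card <| hfiber.ssubset_of_ne fun heq =>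
      hfull (heq.symm.subset.trans (filter_subset _ _))
    omega

theorem StrictHall.isForest_edgesOf (h : StrictHall T B) (hB : ∀ i ∈ T, #(B i) ≤ 2) :
    IsForest (edgesOf T B) := by
  intro E' hE' hne
  set full := {i ∈ E'.image Prod.snd | B i ×ˢ {i} ⊆ E'}
  have hcard : #E' ≤ #(E'.image Prod.snd) + #full := card_le_card_image_snd_add_card_filter hB hE'
  have hfullT : full ⊆ T := (filter_subset _ _).trans <|
    image_subset_iff.2 fun e he => (mem_edgesOf.1 (hE' he)).1
  have hfst : full.biUnion B ⊆ E'.image Prod.fst := by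
    refine biUnion_subset.2 fun i hi b hb => ?_
    exact mem_image_of_mem Prod.fst ((mem_filter.1 hi).2 (mk_mem_product hb (mem_singleton_self i)))
  have hlt : #full < #(E'.image Prod.fst) := by
    rcases full.eq_empty_or_nonempty with hempty | hfull_ne
    · rw [hempty, card_empty]
      exact (hne.image _).card_pos
    · exact (h full hfullT hfull_ne).trans_le (card_le_card hfst)
  omega

theorem strictHall_iff_exists_isForest :
    StrictHall T A ↔ ∃ E : Finset (β × ι), (∀ e ∈ E, e.2 ∈ T ∧ e.1 ∈ A e.2) ∧
      (∀ i ∈ T, #{e ∈ E | e.2 = i} = 2) ∧ IsForest E := by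
  constructor
  · intro h
    obtain ⟨B, hBA, hB_card, hB⟩ := h.exists_subfamily_card_eq_two
    refine ⟨edgesOf T B, fun e he => ?_, fun i hi => ?_,
      hB.isForest_edgesOf fun i hi => (hB_card i hi).le⟩
    · exact (mem_edgesOf.1 he).imp_right fun hb => hBA _ hb
    · rw [filter_edgesOf_snd_eq hi, card_product, card_singleton, mul_one, hB_card i hi]
  · rintro ⟨E, hEA, hdeg, hE⟩
    exact hE.strictHall (fun e he => (hEA e he).2) fun i hi => (hdeg i hi).ge

end Forest

section ClauseVariableGraph

variable {V α : Type} {D : V → Finset α}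

/-- If every value `ε` were excluded by a clause matched to a copy of `v`, then distinct values
would use distinct copies, but there are only `|D v| - 1` of them. -/
theorem exists_value_notMem_of_matched {σ : Type*} {C : σ → Clause D} {f : σ → V × ℕ}
    (hf : Function.Injective f) {v : V} (hv : (D v).Nonempty)
    (hcopy : ∀ i, (f i).1 = v → (f i).2 < (D v).card - 1) :
    ∃ ε ∈ D v, ∀ i, (f i).1 = v → (v, ε) ∉ (C i).1 := by
  by_contra! hcon
  choose i hiv hi using fun ε : D v => hcon ε ε.2
  let copy : D v → Fin ((D v).card - 1) := fun ε => ⟨(f (i ε)).2, hcopy _ (hiv ε)⟩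
  obtain ⟨ε, ε', hne, hcopy_eq⟩ := Fintype.exists_ne_map_eq_of_card_lt copy (by simpa using hv)
  have hii' : i ε = i ε' :=
    hf (Prod.ext ((hiv ε).trans (hiv ε').symm) (congrArg Fin.val hcopy_eq))
  have hmem : (v, ε.1) ∈ (C (i ε')).1 := hii' ▸ hi ε
  exact hne (Subtype.ext (congrArg Prod.snd ((C (i ε')).2.2 _ hmem _ (hi ε') rfl)))

/-- The partial assignment with domain `W` and values given by `a`. -/
def assignOn (W : Finset V) (a : W → α) (ha : ∀ v : W, a v ∈ D v) : PAssign D :=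
  ⟨W.attach.map ⟨fun v : W => (v.1, a v), fun _ _ h => Subtype.ext (Prod.ext_iff.1 h).1⟩, by
    simp only [Finset.forall_mem_map]
    refine ⟨fun v _ => ha v, fun v _ w _ hvw => ?_⟩
    rw [Subtype.ext hvw]⟩

theorem mem_assignOn {W : Finset V} {a : W → α} (ha : ∀ v : W, a v ∈ D v) {v : V} {ε : α} :
    (v, ε) ∈ (assignOn W a ha).1 ↔ ∃ hv : v ∈ W, a ⟨v, hv⟩ = ε := by
  simp only [assignOn, Finset.mem_map, Finset.mem_attach, true_and]
  constructor
  · rintro ⟨w, hw⟩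
    obtain ⟨rfl, rfl⟩ := Prod.mk.inj hw
    exact ⟨w.2, rfl⟩
  · rintro ⟨hv, rfl⟩
    exact ⟨⟨v, hv⟩, rfl⟩

variable [DecidableEq V]

theorem FinFn.mem_vars {s : FinFn D} {v : V} : v ∈ s.vars ↔ ∃ ε, (v, ε) ∈ s.1 := by
  simp [FinFn.vars]

theorem vars_assignOn {W : Finset V} {a : W → α} (ha : ∀ v : W, a v ∈ D v) :
    (assignOn W a ha).vars = W := by
  ext v
  simp [FinFn.mem_vars, mem_assignOn]

/-- The variable-nodes of the clause-variable graph belonging to the variables in `W`: the copies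
`(v, k)`, `k < |D v| - 1`, of each `v ∈ W`. -/
def varNodes (D : V → Finset α) (W : Finset V) : Finset (V × ℕ) :=
  W.biUnion fun v => {v} ×ˢ Finset.range ((D v).card - 1)

theorem mem_varNodes {W : Finset V} {u : V × ℕ} :
    u ∈ varNodes D W ↔ u.1 ∈ W ∧ u.2 < (D u.1).card - 1 := by
  simp only [varNodes, Finset.mem_biUnion, Finset.mem_product, Finset.mem_singleton,
    Finset.mem_range]
  grind

theorem varNodes_mono {W W' : Finset V} (h : W ⊆ W') : varNodes D W ⊆ varNodes D W' :=
  Finset.biUnion_subset_biUnion_of_subset_left _ h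

/-- The clause-nodes adjacent to the copies of `v`: the positions in `L` of the clauses in which
`v` occurs. Positions stand for clause-occurrences, since `L` may contain repeated clauses. -/
def occurrences (L : List (Clause D)) (v : V) : Finset (Fin L.length) :=
  {i | v ∈ (L.get i).vars}

theorem mem_occurrences {L : List (Clause D)} {v : V} {i : Fin L.length} :
    i ∈ occurrences L v ↔ v ∈ (L.get i).vars := by
  simp [occurrences]

theorem touchedBy_coe (L : List (Clause D)) (W : Finset V) :
    touchedBy (↑L : Multiset (Clause D)) W = (W.biUnion (occurrences L)).val.map L.get := by
  have hL : (↑L : Multiset (Clause D)) = (Finset.univ : Finset (Fin L.length)).val.map L.get := by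
    simp
  have hW : W.biUnion (occurrences L) =
      Finset.univ.filter fun i => ((L.get i).vars ∩ W).Nonempty := by
    ext i
    simp only [Finset.mem_biUnion, mem_occurrences, Finset.mem_filter_univ, Finset.Nonempty,
      Finset.mem_inter, and_comm]
  rw [touchedBy, hL, Multiset.filter_map, hW]
  rfl

theorem exists_isMatchingAutarky_vars_eq {L : List (Clause D)} {W : Finset V}
    (hW : ∀ v ∈ W, (D v).Nonempty) {S : Finset (Fin L.length)}
    (hS : W.biUnion (occurrences L) = S) {f : S → V × ℕ} (hf : Function.Injective f)
    (hnode : ∀ i, f i ∈ varNodes D W) (hocc : ∀ i, ↑i ∈ occurrences L (f i).1) :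
    ∃ φ : PAssign D, IsMatchingAutarky φ (↑L : Multiset (Clause D)) ∧ φ.vars = W := by
  have hvalue : ∀ v : W, ∃ ε ∈ D v, ∀ i, (f i).1 = v → (↑v, ε) ∉ (L.get i).1 := fun v =>
    exists_value_notMem_of_matched hf (hW v v.2) fun i hi => hi ▸ (mem_varNodes.1 (hnode i)).2
  choose a ha hfree using hvalue
  refine ⟨assignOn W a ha, ⟨S.attach.val.map fun i : S => (L.get i, f i), ?_, ?_, ?_⟩,
    vars_assignOn ha⟩
  · rw [Multiset.map_map, vars_assignOn, touchedBy_coe, hS]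
    exact Multiset.attach_map_val' S.val L.get
  · rw [Multiset.map_map]
    exact S.attach.nodup.map hf
  · simp only [Multiset.mem_map, forall_exists_index, and_imp, forall_apply_eq_imp_iff₂]
    intro i _
    obtain ⟨hiW, hcopy⟩ := mem_varNodes.1 (hnode i)
    obtain ⟨ε, hε⟩ := FinFn.mem_vars.1 (mem_occurrences.1 (hocc i))
    refine ⟨hcopy, ε, hε, a ⟨_, hiW⟩, (mem_assignOn ha).2 ⟨hiW, rfl⟩, ?_⟩
    rintro rfl
    exact hfree ⟨_, hiW⟩ i rfl hε

end ClauseVariableGraph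

theorem mem_mvars {F : Multiset (Clause D)} {v : V} : v ∈ mvars F ↔ ∃ C ∈ F, v ∈ C.vars := by
  simp [mvars, Finset.mem_sup]

theorem domain_nonempty_of_mem_mvars {F : Multiset (Clause D)} {v : V} (hv : v ∈ mvars F) :
    (D v).Nonempty := by
  obtain ⟨C, -, hvC⟩ := mem_mvars.1 hv
  obtain ⟨ε, hε⟩ := FinFn.mem_vars.1 hvC
  exact ⟨ε, C.2.1 _ hε⟩

theorem mem_mvars_coe {L : List (Clause D)} {v : V} :
    v ∈ mvars (↑L : Multiset (Clause D)) ↔ (occurrences L v).Nonempty := by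
  simp only [mem_mvars, Multiset.mem_coe, List.mem_iff_get, Finset.Nonempty, mem_occurrences]
  grind

theorem IsMatchingAutarky.card_biUnion_occurrences_le {L : List (Clause D)} {φ : PAssign D}
    (h : IsMatchingAutarky φ (↑L : Multiset (Clause D))) :
    (φ.vars.biUnion (occurrences L)).card ≤
      (varNodes D (φ.vars ∩ mvars (↑L : Multiset (Clause D)))).card := by
  obtain ⟨P, hfst, hnodup, hedge⟩ := h
  have hmatched : P.map Prod.snd ⊆
      (varNodes D (φ.vars ∩ mvars (↑L : Multiset (Clause D)))).val := by
    intro u hu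
    obtain ⟨p, hp, rfl⟩ := Multiset.mem_map.1 hu
    obtain ⟨hcopy, ε, hε, δ, hδ, -⟩ := hedge p hp
    have hpL : p.1 ∈ touchedBy (↑L : Multiset (Clause D)) φ.vars :=
      hfst ▸ Multiset.mem_map_of_mem Prod.fst hp
    refine mem_varNodes.2 ⟨Finset.mem_inter.2 ⟨FinFn.mem_vars.2 ⟨δ, hδ⟩, ?_⟩, hcopy⟩
    exact mem_mvars.2 ⟨p.1, (Multiset.mem_filter.1 hpL).1, FinFn.mem_vars.2 ⟨ε, hε⟩⟩
  calc (φ.vars.biUnion (occurrences L)).card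
      = (touchedBy (↑L : Multiset (Clause D)) φ.vars).card := by
        rw [touchedBy_coe, Multiset.card_map, Finset.card_val]
    _ = (P.map Prod.snd).card := by rw [← hfst, Multiset.card_map, Multiset.card_map]
    _ ≤ _ := Multiset.card_le_card ((Multiset.le_iff_subset hnodup).2 hmatched)

theorem matchingLean_of_strictHall {L : List (Clause D)}
    (h : StrictHall (varNodes D (mvars (↑L : Multiset (Clause D)))) fun u => occurrences L u.1) :
    MatchingLean (↑L : Multiset (Clause D)) := by
  rintro ⟨φ, hφ, v, hv⟩
  obtain ⟨hvφ, hvL⟩ := Finset.mem_inter.1 hv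
  set W := φ.vars ∩ mvars (↑L : Multiset (Clause D))
  have hcard : (φ.vars.biUnion (occurrences L)).card ≤ (varNodes D W).card :=
    hφ.card_biUnion_occurrences_le
  have htouched : 0 < (φ.vars.biUnion (occurrences L)).card :=
    ((mem_mvars_coe.1 hvL).mono (Finset.subset_biUnion_of_mem _ hvφ)).card_pos
  have hlt := h (varNodes D W) (varNodes_mono Finset.inter_subset_right)
    (Finset.card_pos.1 (htouched.trans_le hcard))
  have hsub : (varNodes D W).biUnion (fun u => occurrences L u.1) ⊆
      φ.vars.biUnion (occurrences L) :=
    Finset.biUnion_subset.2 fun u hu =>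
      Finset.subset_biUnion_of_mem _ (Finset.mem_inter.1 (mem_varNodes.1 hu).1).1
  exact (hlt.trans_le (Finset.card_le_card hsub)).not_ge hcard

theorem MatchingLean.strictHall {L : List (Clause D)}
    (h : MatchingLean (↑L : Multiset (Clause D))) :
    StrictHall (varNodes D (mvars (↑L : Multiset (Clause D)))) fun u => occurrences L u.1 := by
  by_contra hcon
  obtain ⟨I, hI, hne, f, hf, hfI⟩ := exists_injective_of_not_strictHall hcon
  have hnode : ∀ u ∈ I, u ∈ varNodes D (I.image Prod.fst) := fun u hu =>
    mem_varNodes.2 ⟨Finset.mem_image_of_mem _ hu, (mem_varNodes.1 (hI hu)).2⟩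
  have hvars : I.image Prod.fst ⊆ mvars (↑L : Multiset (Clause D)) :=
    Finset.image_subset_iff.2 fun u hu => (mem_varNodes.1 (hI hu)).1
  obtain ⟨φ, hφ, hφ_vars⟩ := exists_isMatchingAutarky_vars_eq
    (fun v hv => domain_nonempty_of_mem_mvars (hvars hv)) Finset.image_biUnion hf
    (fun i => hnode _ (hfI i).1) (fun i => (hfI i).2)
  refine h ⟨φ, hφ, ?_⟩
  rw [hφ_vars, Finset.inter_eq_left.2 hvars]
  exact hne.image _

theorem mem_varNodes_and_mem_occurrences_iff {L : List (Clause D)} {e : ℕ × (V × ℕ)} :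
    e.2 ∈ varNodes D (mvars (↑L : Multiset (Clause D))) ∧
        e.1 ∈ (occurrences L e.2.1).map Fin.valEmbedding ↔
      ∃ h : e.1 < L.length, e.2.1 ∈ (L.get ⟨e.1, h⟩).vars ∧ e.2.2 < (D e.2.1).card - 1 := by
  simp only [mem_varNodes, mem_mvars_coe, Finset.mem_map, Fin.valEmbedding_apply, mem_occurrences]
  constructor
  · rintro ⟨⟨-, hcopy⟩, i, hi, hie⟩
    exact ⟨hie ▸ i.2, by simpa [← hie] using hi, hcopy⟩
  · rintro ⟨hlt, hmem, hcopy⟩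
    exact ⟨⟨⟨⟨e.1, hlt⟩, mem_occurrences.2 hmem⟩, hcopy⟩, ⟨e.1, hlt⟩, hmem, rfl⟩

theorem matchingLean_iff_strictHall {L : List (Clause D)} :
    MatchingLean (↑L : Multiset (Clause D)) ↔
      StrictHall (varNodes D (mvars (↑L : Multiset (Clause D)))) fun u => occurrences L u.1 :=
  ⟨MatchingLean.strictHall, matchingLean_of_strictHall⟩

/-- `F` is matching lean iff the bipartite clause-variable graph
`B(F)` (here presented via an enumeration `L` of the clause-occurrences; the
variable-nodes are the pairs `(v,k)` with `k < |D v| − 1`) has a subgraph, given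
by its edge set `E`, which is a forest (every non-empty subset of edges spans
strictly more vertices than edges), covers all variable-nodes, and in which every
variable-node has degree exactly `2`. -/
theorem matchingLean_iff_forest
    (hD : ∀ v, (D v).Nonempty) (F : Multiset (Clause D))
    (L : List (Clause D)) (hL : (↑L : Multiset (Clause D)) = F) :
    MatchingLean F ↔
      ∃ E : Finset (ℕ × (V × ℕ)),
        (∀ e ∈ E, ∃ h : e.1 < L.length,
            e.2.1 ∈ FinFn.vars (L.get ⟨e.1, h⟩) ∧ e.2.2 < (D e.2.1).card - 1) ∧
        (∀ v ∈ mvars F, ∀ k < (D v).card - 1,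
            (E.filter (fun e => e.2 = (v, k))).card = 2) ∧
        (∀ E' ⊆ E, E'.Nonempty →
            E'.card + 1 ≤ (E'.image Prod.fst).card + (E'.image Prod.snd).card) := by
  subst hL
  rw [matchingLean_iff_strictHall, ← strictHall_map_iff Fin.valEmbedding,
    strictHall_iff_exists_isForest]
  refine exists_congr fun E => and_congr ?_ (and_congr ?_ Iff.rfl)
  · exact forall₂_congr fun e _ => mem_varNodes_and_mem_occurrences_iff
  · simp only [Prod.forall, mem_varNodes, and_imp]
    exact forall_congr' fun v => forall_comm

end GCLS
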